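/- Assume condition (C) and (K,c) ∈ D₁. If μ_b(K,c) ≤ μ_f(K,c) (equivalently, by Proposition BMBF, c ≤ c_*(K), i.e. (K,c) ∈ D_{1,2} ∪ D_{1,3}), then for every μ ∈ ℝ the system (TV) has no solution with u > 0 satisfying (HO) with level ū = u₁. If instead μ_b(K,c) ≥ μ_f(K,c) (i.e. (K,c) ∈ D_{1,1} ∪ D_{1,3}), then for every μ ∈ ℝ the system (TV) has no solution with u > 0 satisfying (HO) with level ū = u₂. -/

import Mathlib

open Set Filter MeasureTheory

noncomputable section

namespace TrafficTW

/-- `f(u) = (K u - V(u) - c)/K`. -/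
def fTV (V : ℝ → ℝ) (K c u : ℝ) : ℝ := (K * u - V u - c) / K

/-- `f'(u) = (K - V'(u))/K`. -/
def fdTV (V' : ℝ → ℝ) (K u : ℝ) : ℝ := (K - V' u) / K

/-- `h(u,μ) = f'(u) + μ`. -/
def hTV (V' : ℝ → ℝ) (K μ u : ℝ) : ℝ := fdTV V' K u + μ

/-- `g₁(u) = 1/(τ κ(1/u))`. -/
def g1TV (κ : ℝ → ℝ) (τ u : ℝ) : ℝ := 1 / (τ * κ (1 / u))

/-- `g₂(u) = u/(2 τ κ(1/u))`. -/
def g2TV (κ : ℝ → ℝ) (τ u : ℝ) : ℝ := u / (2 * τ * κ (1 / u))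

/-- The traveling-wave system (TV): `u' = w`, `w' = g₁ f + g₂ h w`. -/
def IsTVSol (V V' κ : ℝ → ℝ) (τ K c μ : ℝ) (u w : ℝ → ℝ) : Prop :=
  (∀ z, HasDerivAt u (w z) z) ∧
  (∀ z, HasDerivAt w
    (g1TV κ τ (u z) * fTV V K c (u z) + g2TV κ τ (u z) * hTV V' K μ (u z) * w z) z)

/-- Assumption (A1), where `V'` and `V''` are the first and second derivatives of `V`. -/
def A1 (V V' V'' : ℝ → ℝ) (UM : ℝ) : Prop :=
  (∀ u ∈ Ici (0:ℝ), HasDerivWithinAt V (V' u) (Ici 0) u) ∧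
  ContinuousOn V' (Ici 0) ∧
  (∀ u ∈ Ioi (0:ℝ), HasDerivAt V' (V'' u) u) ∧
  ContinuousOn V'' (Ioi 0) ∧
  (∀ u, 0 < u → 0 < V' u) ∧ (∃ M, ∀ u, 0 < u → V' u ≤ M) ∧
  Tendsto V' atTop (nhds 0) ∧
  0 < UM ∧ (∀ u, 0 < u → V' u ≤ V' UM) ∧
  (∀ u, 0 < u → (V'' u = 0 ↔ u = UM))

/-- Assumption (A2). -/
def A2 (κ : ℝ → ℝ) : Prop :=
  ContDiffOn ℝ 1 κ (Ioi 0) ∧ ∀ ρ, 0 < ρ → 0 < κ ρ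

/-- `c₀ = -V(0)`. -/
def c0v (V : ℝ → ℝ) : ℝ := - V 0

/-- `c_M(K) = K u_M(K) - V(u_M(K))`, where `uMx` is the function `K ↦ u_M(K)`. -/
def cMf (V : ℝ → ℝ) (uMx : ℝ → ℝ) (K : ℝ) : ℝ := K * uMx K - V (uMx K)

/-- `c_m(K) = K u_m(K) - V(u_m(K))`, where `umx` is the function `K ↦ u_m(K)`. -/
def cmf (V : ℝ → ℝ) (umx : ℝ → ℝ) (K : ℝ) : ℝ := K * umx K - V (umx K)

/-- `c₁(K) = max (c₀, c_m(K))`. -/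
def c1f (V : ℝ → ℝ) (umx : ℝ → ℝ) (K : ℝ) : ℝ := max (c0v V) (cmf V umx K)

/-- `uMx K = u_M(K)` is the unique local maximum point of `u ↦ K u - V(u)`, characterized
by `u_M(K) ∈ (0, U_M)` and `V'(u_M(K)) = K`, for `K ∈ (K₀, K_M)`. -/
def UMaxHyp (V' : ℝ → ℝ) (UM : ℝ) (uMx : ℝ → ℝ) : Prop :=
  ∀ K, V' 0 < K → K < V' UM → uMx K ∈ Ioo 0 UM ∧ V' (uMx K) = K

/-- `umx K = u_m(K)` is the unique local minimum point of `u ↦ K u - V(u)`, characterized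
by `u_m(K) ∈ (U_M, ∞)` and `V'(u_m(K)) = K`, for `K ∈ (0, K_M)`. -/
def UMinHyp (V' : ℝ → ℝ) (UM : ℝ) (umx : ℝ → ℝ) : Prop :=
  ∀ K, 0 < K → K < V' UM → UM < umx K ∧ V' (umx K) = K

/-- Characterization of `K₁ ∈ (K₀, K_M)`: `c_m(K) < c₀` for `K < K₁` and `c_m(K) > c₀`
for `K > K₁`. -/
def K1Hyp (V V' : ℝ → ℝ) (UM : ℝ) (umx : ℝ → ℝ) (K₁ : ℝ) : Prop :=
  V' 0 < K₁ ∧ K₁ < V' UM ∧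
  (∀ K, 0 < K → K < K₁ → cmf V umx K < c0v V) ∧
  cmf V umx K₁ = c0v V ∧
  (∀ K, K₁ < K → K < V' UM → c0v V < cmf V umx K)

/-- The parameter region `D₁`. -/
def D1 (V V' : ℝ → ℝ) (UM : ℝ) (uMx umx : ℝ → ℝ) : Set (ℝ × ℝ) :=
  {p | V' 0 < p.1 ∧ p.1 < V' UM ∧ c1f V umx p.1 < p.2 ∧ p.2 < cMf V uMx p.1}

/-- The parameter region `D₂`. -/
def D2 (V V' : ℝ → ℝ) (umx : ℝ → ℝ) (K₁ : ℝ) : Set (ℝ × ℝ) :=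
  {p | (V' 0 < p.1 ∧ p.1 < K₁ ∧ p.2 = c0v V) ∨
       (0 < p.1 ∧ p.1 < K₁ ∧ cmf V umx p.1 < p.2 ∧ p.2 < c0v V)}

/-- For `(K,c) ∈ D₁`: `u₁ < u₀ < u₂` are the exactly three positive zeros of `f`. -/
def ZerosD1 (V : ℝ → ℝ) (K c u1 u0 u2 : ℝ) : Prop :=
  0 < u1 ∧ u1 < u0 ∧ u0 < u2 ∧
  fTV V K c u1 = 0 ∧ fTV V K c u0 = 0 ∧ fTV V K c u2 = 0 ∧
  ∀ u, 0 < u → fTV V K c u = 0 → u = u1 ∨ u = u0 ∨ u = u2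

/-- For `(K,c) ∈ D₂`: `u₀ < u₂` are the exactly two positive zeros of `f`. -/
def ZerosD2 (V : ℝ → ℝ) (K c u0 u2 : ℝ) : Prop :=
  0 < u0 ∧ u0 < u2 ∧ fTV V K c u0 = 0 ∧ fTV V K c u2 = 0 ∧
  ∀ u, 0 < u → fTV V K c u = 0 → u = u0 ∨ u = u2

/-- Condition (HE1). -/
def HE1 (u1 u2 : ℝ) (u w : ℝ → ℝ) : Prop :=
  Tendsto u atBot (nhds u1) ∧ Tendsto u atTop (nhds u2) ∧
  Tendsto w atBot (nhds 0) ∧ Tendsto w atTop (nhds 0) ∧ ∀ z, 0 < w z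

/-- Condition (HE2). -/
def HE2 (u1 u2 : ℝ) (u w : ℝ → ℝ) : Prop :=
  Tendsto u atBot (nhds u2) ∧ Tendsto u atTop (nhds u1) ∧
  Tendsto w atBot (nhds 0) ∧ Tendsto w atTop (nhds 0) ∧ ∀ z, w z < 0

/-- Condition (HO) with level `ub`. -/
def HO (ub : ℝ) (u w : ℝ → ℝ) : Prop :=
  Tendsto u atBot (nhds ub) ∧ Tendsto u atTop (nhds ub) ∧
  Tendsto w atBot (nhds 0) ∧ Tendsto w atTop (nhds 0) ∧
  ¬ (∀ z, u z = ub ∧ w z = 0)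

/-- (TV) with parameter `μ` has a positive solution satisfying (HE1). -/
def HasHE1 (V V' κ : ℝ → ℝ) (τ K c μ u1 u2 : ℝ) : Prop :=
  ∃ u w : ℝ → ℝ, IsTVSol V V' κ τ K c μ u w ∧ (∀ z, 0 < u z) ∧ HE1 u1 u2 u w

/-- (TV) with parameter `μ` has a positive solution satisfying (HE2). -/
def HasHE2 (V V' κ : ℝ → ℝ) (τ K c μ u1 u2 : ℝ) : Prop :=
  ∃ u w : ℝ → ℝ, IsTVSol V V' κ τ K c μ u w ∧ (∀ z, 0 < u z) ∧ HE2 u1 u2 u w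

/-- (TV) with parameter `μ` has a positive solution satisfying (HO) with level `ub`. -/
def HasHO (V V' κ : ℝ → ℝ) (τ K c μ ub : ℝ) : Prop :=
  ∃ u w : ℝ → ℝ, IsTVSol V V' κ τ K c μ u w ∧ (∀ z, 0 < u z) ∧ HO ub u w

/-- Condition (H): `∫₁^∞ dρ/(ρ³ κ(ρ)) = ∞`. -/
def CondH (κ : ℝ → ℝ) : Prop :=
  ¬ IntegrableOn (fun ρ => 1 / (ρ ^ 3 * κ ρ)) (Ioi 1)

/-- Condition (C). -/
def CondC (V' κ : ℝ → ℝ) (UM K₁ K : ℝ) : Prop :=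
  (K₁ < K ∧ K < V' UM) ∨ (CondH κ ∧ V' 0 < K ∧ K ≤ K₁)

/-- Periodic solution. -/
def IsPeriodicSol (u w : ℝ → ℝ) : Prop :=
  ∃ Z, 0 < Z ∧ ∀ z, u (z + Z) = u z ∧ w (z + Z) = w z

/-- Nonconstant pair of functions. -/
def Nonconst (u w : ℝ → ℝ) : Prop := ∃ z, u z ≠ u 0 ∨ w z ≠ w 0

/-- Discriminant of the Jacobian at an equilibrium `(u,0)`. -/
def discTV (V' κ : ℝ → ℝ) (τ K u μ : ℝ) : ℝ :=
  (g2TV κ τ u) ^ 2 * (hTV V' K μ u) ^ 2 + 4 * g1TV κ τ u * fdTV V' K u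

/-- The eigenvalue `λ₊(u)`. -/
def lamP (V' κ : ℝ → ℝ) (τ K u μ : ℝ) : ℝ :=
  (g2TV κ τ u * hTV V' K μ u + Real.sqrt (discTV V' κ τ K u μ)) / 2

/-- The eigenvalue `λ₋(u)`. -/
def lamM (V' κ : ℝ → ℝ) (τ K u μ : ℝ) : ℝ :=
  (g2TV κ τ u * hTV V' K μ u - Real.sqrt (discTV V' κ τ K u μ)) / 2

/-- `Z` is the minimal period of `(u,w)`. -/
def IsMinPeriod (u w : ℝ → ℝ) (Z : ℝ) : Prop :=
  0 < Z ∧ (∀ z, u (z + Z) = u z ∧ w (z + Z) = w z) ∧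
  ∀ Z', 0 < Z' → (∀ z, u (z + Z') = u z ∧ w (z + Z') = w z) → Z ≤ Z'


/-- Abstract planar system `u' = w`, `w' = F(u) + G(u) w` in the strip `u ∈ I`. -/
def ASol (I : Set ℝ) (F G : ℝ → ℝ) (u w : ℝ → ℝ) : Prop :=
  (∀ z, u z ∈ I) ∧ (∀ z, HasDerivAt u (w z) z) ∧
  (∀ z, HasDerivAt w (F (u z) + G (u z) * w z) z)

/-- Lipschitz-type bound of `F` at its zeros, on compact sets. -/
def LipZ (I : Set ℝ) (F : ℝ → ℝ) : Prop :=
  ∀ b ∈ I, F b = 0 → ∀ S ⊆ I, IsCompact S → ∃ L, ∀ x ∈ S, |F x| ≤ L * |x - b|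

/-- Sign pattern of `F`. -/
def SignP (I : Set ℝ) (F : ℝ → ℝ) (a b d : ℝ) : Prop :=
  a < b ∧ b < d ∧ a ∈ I ∧ d ∈ I ∧ F a = 0 ∧ F d = 0 ∧ Ioo a d ⊆ I ∧
  (∀ x ∈ I, x < a → F x < 0) ∧ (∀ x ∈ Ioo a b, 0 < F x) ∧
  (∀ x ∈ Ioo b d, F x < 0) ∧ (∀ x ∈ I, d < x → 0 < F x)

theorem ASol.rev {I : Set ℝ} {F G u w : ℝ → ℝ} (h : ASol I F G u w) :
    ASol I F (fun x => - G x) (fun z => u (-z)) (fun z => - w (-z)) := by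
  obtain ⟨h1, h2, h3⟩ := h
  refine ⟨fun z => h1 _, fun z => ?_, fun z => ?_⟩
  · have := (h2 (-z)).comp z (hasDerivAt_neg z)
    simpa [Function.comp_def] using this
  · have := ((h3 (-z)).comp z (hasDerivAt_neg z)).neg
    simp only [Function.comp_def] at this
    refine (this.congr_deriv ?_)
    ring

theorem ASol.refl {I : Set ℝ} {F G u w : ℝ → ℝ} (h : ASol I F G u w) :
    ASol {x | -x ∈ I} (fun x => - F (-x)) (fun x => G (-x)) (fun z => - u z) (fun z => - w z) := by
  obtain ⟨h1, h2, h3⟩ := h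
  refine ⟨fun z => by simpa using h1 z, fun z => (h2 z).neg, fun z => ?_⟩
  refine ((h3 z).neg).congr_deriv ?_
  simp only [neg_neg]; ring

theorem LipZ.refl {I : Set ℝ} {F : ℝ → ℝ} (h : LipZ I F) :
    LipZ {x | -x ∈ I} (fun x => - F (-x)) := by
  intro b hb hFb S hS hSc
  obtain ⟨L, hL⟩ := h (-b) hb (by simpa using hFb) ((fun x => -x) '' S)
    (by rintro _ ⟨x, hx, rfl⟩; exact hS hx) (hSc.image continuous_neg)
  refine ⟨L, fun x hx => ?_⟩
  have := hL (-x) ⟨x, hx, rfl⟩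
  rw [abs_neg]
  rwa [show -x - -b = -(x - b) by ring, abs_neg] at this

theorem SignP.refl {I : Set ℝ} {F : ℝ → ℝ} {a b d : ℝ} (h : SignP I F a b d) :
    SignP {x | -x ∈ I} (fun x => - F (-x)) (-d) (-b) (-a) := by
  obtain ⟨h1, h2, h3, h4, h5, h6, h7, h8, h9, h10, h11⟩ := h
  refine ⟨by linarith, by linarith, by simpa using h4, by simpa using h3, by simpa using h6,
    by simpa using h5, ?_, ?_, ?_, ?_, ?_⟩
  · intro x hx; exact h7 ⟨by linarith [hx.2], by linarith [hx.1]⟩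
  · intro x hx hxd; have := h11 (-x) hx (by linarith); linarith
  · intro x hx; have := h10 (-x) ⟨by linarith [hx.2], by linarith [hx.1]⟩; linarith
  · intro x hx; have := h9 (-x) ⟨by linarith [hx.2], by linarith [hx.1]⟩; linarith
  · intro x hx hxd; have := h8 (-x) hx (by linarith); linarith

theorem uniq_fwd {I : Set ℝ} {F G u w : ℝ → ℝ} (h : ASol I F G u w) (hG : ContinuousOn G I)
    (hL : LipZ I F) {b z0 : ℝ} (hb : F b = 0) (hu : u z0 = b) (hw : w z0 = 0) :
    ∀ z, z0 ≤ z → u z = b ∧ w z = 0 := by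
  intro z1 hz1
  obtain ⟨h1, h2, h3⟩ := h
  have hbI : b ∈ I := hu ▸ h1 z0
  have cu : Continuous u := continuous_iff_continuousAt.2 fun z => (h2 z).continuousAt
  have cw : Continuous w := continuous_iff_continuousAt.2 fun z => (h3 z).continuousAt
  have hSI : u '' Icc z0 z1 ⊆ I := by rintro _ ⟨x, -, rfl⟩; exact h1 x
  have hSc : IsCompact (u '' Icc z0 z1) := isCompact_Icc.image cu
  obtain ⟨L, hL⟩ := hL b hbI hb _ hSI hSc
  obtain ⟨M, hM⟩ := hSc.exists_bound_of_continuousOn (hG.mono hSI)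
  have key := eq_zero_of_abs_deriv_le_mul_abs_self_of_eq_zero_right
    (f := fun z => (u z - b, w z)) (f' := fun z => (w z, F (u z) + G (u z) * w z))
    (K := 1 + |L| + M) (a := z0) (b := z1)
    ((cu.sub continuous_const).prodMk cw).continuousOn
    (fun x _ => (((h2 x).sub_const b).prodMk (h3 x)).hasDerivWithinAt)
    (by simp [hu, hw]) ?_ z1 ⟨hz1, le_rfl⟩
  · have := Prod.ext_iff.1 key
    simp only [Prod.fst_zero, Prod.snd_zero] at this
    exact ⟨by linarith [this.1], this.2⟩
  · intro x hx
    have hxS : u x ∈ u '' Icc z0 z1 := ⟨x, ⟨hx.1, hx.2.le⟩, rfl⟩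
    have a1 := hL _ hxS
    have a2 := hM _ hxS
    rw [Real.norm_eq_abs] at a2
    have b1 : |u x - b| ≤ ‖((u x - b, w x) : ℝ × ℝ)‖ := norm_fst_le (u x - b, w x)
    have b2 : |w x| ≤ ‖((u x - b, w x) : ℝ × ℝ)‖ := norm_snd_le (u x - b, w x)
    set N := ‖((u x - b, w x) : ℝ × ℝ)‖
    have hN : 0 ≤ N := norm_nonneg _
    have hM0 : 0 ≤ M := le_trans (abs_nonneg _) a2
    rw [Prod.norm_def]
    simp only [Real.norm_eq_abs]
    refine max_le ?_ ?_
    · nlinarith [abs_nonneg L, mul_nonneg (abs_nonneg L) hN, mul_nonneg hM0 hN]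
    · calc |F (u x) + G (u x) * w x| ≤ |F (u x)| + |G (u x)| * |w x| := by
            rw [← abs_mul]; exact abs_add_le _ _
        _ ≤ |L| * N + M * N := by
            refine add_le_add ?_ (mul_le_mul a2 b2 (abs_nonneg _) hM0)
            exact a1.trans (mul_le_mul (le_abs_self L) b1 (abs_nonneg _) (abs_nonneg _))
        _ ≤ (1 + |L| + M) * N := by nlinarith

theorem uniq_all {I : Set ℝ} {F G u w : ℝ → ℝ} (h : ASol I F G u w) (hG : ContinuousOn G I)
    (hL : LipZ I F) {b z0 : ℝ} (hb : F b = 0) (hu : u z0 = b) (hw : w z0 = 0) :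
    ∀ z, u z = b ∧ w z = 0 := by
  intro z
  rcases le_total z0 z with hz | hz
  · exact uniq_fwd h hG hL hb hu hw z hz
  · have := uniq_fwd h.rev hG.neg hL (z0 := -z0) hb (by simpa using hu) (by simpa using hw) (-z)
      (by linarith)
    simpa using this

/-- At a zero of `u' = w` with `w' > 0`, `u` is strictly larger somewhere to the left. -/
theorem left_larger {u w : ℝ → ℝ} {d z : ℝ} (hu : ∀ z, HasDerivAt u (w z) z)
    (hw : HasDerivAt w d z) (hz : w z = 0) (hd : 0 < d) : ∃ y < z, u z < u y := by
  have h1 := hasDerivAt_iff_tendsto_slope.1 hw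
  have h2 : ∀ᶠ y in nhdsWithin z {z}ᶜ, 0 < slope w z y := h1.eventually (lt_mem_nhds hd)
  have h3 : ∀ᶠ y in nhdsWithin z (Iio z), 0 < slope w z y :=
    h2.filter_mono (nhdsWithin_mono z (fun y hy => ne_of_lt hy))
  obtain ⟨l, hl, hsub⟩ := (mem_nhdsLT_iff_exists_Ioo_subset).1 h3
  have hl' : l < z := hl
  set y := (l + z) / 2
  have hy1 : l < y := by simp only [y]; linarith
  have hy2 : y < z := by simp only [y]; linarith
  refine ⟨y, hy2, ?_⟩
  obtain ⟨c, hc, hcs⟩ := exists_hasDerivAt_eq_slope u w hy2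
    (fun x _ => (hu x).continuousAt.continuousWithinAt) (fun x _ => hu x)
  have h4 : 0 < slope w z c := hsub ⟨by linarith [hc.1], hc.2⟩
  rw [slope_def_field, hz, sub_zero] at h4
  have h5 : w c < 0 := by
    by_contra hn
    push Not at hn
    have := div_nonpos_of_nonneg_of_nonpos hn (by linarith [hc.2] : c - z ≤ 0)
    linarith
  have h6 : 0 < z - y := by linarith
  rw [hcs, div_lt_iff₀ h6] at h5
  linarith

theorem max_exists {u : ℝ → ℝ} {l1 l2 x0 : ℝ} (cu : Continuous u)
    (hb : Tendsto u atBot (nhds l1)) (ht : Tendsto u atTop (nhds l2)) (h1 : l1 < u x0)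
    (h2 : l2 < u x0) : ∃ x, ∀ y, u y ≤ u x := by
  refine cu.exists_forall_ge' x0 ?_
  rw [cocompact_eq_atBot_atTop, eventually_sup]
  exact ⟨(hb.eventually (gt_mem_nhds h1)).mono fun _ h => h.le,
    (ht.eventually (gt_mem_nhds h2)).mono fun _ h => h.le⟩

theorem max_exists_left {u : ℝ → ℝ} {l1 z0 : ℝ} (cu : Continuous u)
    (hb : Tendsto u atBot (nhds l1)) (h1 : l1 < u z0) : ∃ x ≤ z0, ∀ y ≤ z0, u y ≤ u x := by
  have : ∃ x, ∀ y, u (min y z0) ≤ u (min x z0) := by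
    refine (cu.comp (continuous_id.min continuous_const)).exists_forall_ge' z0 ?_
    rw [cocompact_eq_atBot_atTop, eventually_sup]
    constructor
    · filter_upwards [hb.eventually (gt_mem_nhds h1), eventually_le_atBot z0] with y hy hy2
      simpa [hy2] using hy.le
    · filter_upwards [eventually_ge_atTop z0] with y hy
      simp [hy]
  obtain ⟨x, hx⟩ := this
  refine ⟨min x z0, min_le_right _ _, fun y hy => ?_⟩
  simpa [hy] using hx y

/-- No zero of `w` before which `u` tends to something smaller, as long as zeros are upcrossings. -/
theorem no_zero_left {u w w' : ℝ → ℝ} {l z0 : ℝ} (hu : ∀ z, HasDerivAt u (w z) z)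
    (hw : ∀ z, HasDerivAt w (w' z) z) (hb : Tendsto u atBot (nhds l)) (h1 : l < u z0)
    (h0 : w z0 = 0) (hup : ∀ z ≤ z0, w z = 0 → l < u z → 0 < w' z) : False := by
  have cu : Continuous u := continuous_iff_continuousAt.2 fun z => (hu z).continuousAt
  obtain ⟨x, hx, hm⟩ := max_exists_left cu hb h1
  have hwx : w x = 0 := by
    rcases hx.eq_or_lt with h | h
    · rw [h]; exact h0
    · refine IsLocalMax.hasDerivAt_eq_zero (f := u) ?_ (hu x)
      filter_upwards [Iio_mem_nhds h] with y hy using hm y (le_of_lt hy)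
  obtain ⟨y, hy, hlt⟩ := left_larger hu (hw x) hwx (hup x hx hwx (lt_of_lt_of_le h1 (hm z0 le_rfl)))
  linarith [hm y (by linarith)]

theorem homo_bounds {I : Set ℝ} {F G u w : ℝ → ℝ} {u1 u0 u2 : ℝ} (h : ASol I F G u w)
    (hG : ContinuousOn G I) (hL : LipZ I F) (hS : SignP I F u1 u0 u2) (hHO : HO u1 u w) :
    ∀ z, u1 < u z ∧ u z < u2 := by
  obtain ⟨h1, h2, h3⟩ := id h
  obtain ⟨s1, s2, s3, s4, s5, s6, s7, s8, s9, s10, s11⟩ := hS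
  obtain ⟨o1, o2, o3, o4, o5⟩ := hHO
  have cu : Continuous u := continuous_iff_continuousAt.2 fun z => (h2 z).continuousAt
  have ge : ∀ z, u1 ≤ u z := by
    by_contra! hn
    obtain ⟨z, hz⟩ := hn
    obtain ⟨x, hx⟩ := max_exists (u := fun z => - u z) (x0 := z) cu.neg o1.neg o2.neg
      (by simpa using hz) (by simpa using hz)
    have hwx : w x = 0 :=
      IsLocalMin.hasDerivAt_eq_zero (f := u) (Eventually.of_forall fun y => by
        have := hx y; linarith) (h2 x)
    have hlt : u x < u1 := by have := hx z; linarith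
    obtain ⟨y, -, hy⟩ := left_larger (u := fun z => - u z) (w := fun z => - w z)
      (fun z => (h2 z).neg) (h3 x).neg (by simpa using hwx)
      (by have := s8 _ (h1 x) hlt; rw [hwx]; linarith)
    linarith [hx y]
  have gt : ∀ z, u1 < u z := by
    intro z
    rcases (ge z).eq_or_lt with e | e
    · exfalso
      have hwx : w z = 0 :=
        IsLocalMin.hasDerivAt_eq_zero (f := u) (Eventually.of_forall fun y => by
          rw [← e]; exact ge y) (h2 z)
      exact o5 (uniq_all h hG hL s5 e.symm hwx)
    · exact e
  obtain ⟨x, hx⟩ := max_exists (x0 := 0) cu o1 o2 (gt 0) (gt 0)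
  have hwx : w x = 0 :=
    IsLocalMax.hasDerivAt_eq_zero (f := u) (Eventually.of_forall fun y => hx y) (h2 x)
  have hxlt : u x < u2 := by
    by_contra! hn
    rcases hn.eq_or_lt with e | e
    · have hc := uniq_all h hG hL s6 e.symm hwx
      have hu : u = fun _ => u2 := funext fun z => (hc z).1
      rw [hu] at o1
      have := tendsto_nhds_unique o1 tendsto_const_nhds
      linarith
    · obtain ⟨y, -, hy⟩ := left_larger h2 (h3 x) hwx
        (by have := s11 _ (h1 x) e; rw [hwx]; linarith)
      linarith [hx y]
  exact fun z => ⟨gt z, lt_of_le_of_lt (hx z) hxlt⟩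

theorem homo_start {I : Set ℝ} {F G u w : ℝ → ℝ} {u1 u0 u2 : ℝ} (h : ASol I F G u w)
    (hS : SignP I F u1 u0 u2) (hHO : HO u1 u w) (hbd : ∀ z, u1 < u z ∧ u z < u2) :
    ∃ Z a, Z < a ∧ (∀ z ≤ Z, u z < u0) ∧ (∀ z < a, 0 < w z) ∧ w a = 0 := by
  obtain ⟨h1, h2, h3⟩ := id h
  obtain ⟨s1, s2, s3, s4, s5, s6, s7, s8, s9, s10, s11⟩ := hS
  obtain ⟨o1, o2, o3, o4, o5⟩ := hHO
  have cu : Continuous u := continuous_iff_continuousAt.2 fun z => (h2 z).continuousAt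
  have cw : Continuous w := continuous_iff_continuousAt.2 fun z => (h3 z).continuousAt
  obtain ⟨Z, hZ⟩ := eventually_atBot.1 (o1.eventually (gt_mem_nhds s1))
  have nz : ∀ z ≤ Z, w z ≠ 0 := by
    intro z hz h0
    refine no_zero_left h2 h3 o1 (hbd z).1 h0 ?_
    intro y hy hwy _
    have := s9 (u y) ⟨(hbd y).1, hZ y (by linarith)⟩
    rw [hwy]; linarith
  have pos : ∀ z ≤ Z, 0 < w z := by
    by_contra! hn
    obtain ⟨y, hy, hwy⟩ := hn
    have hneg : ∀ z ≤ y, w z < 0 := by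
      intro z hz
      by_contra! hzz
      obtain ⟨t, ht, ht0⟩ := intermediate_value_Icc' hz cw.continuousOn ⟨hwy, hzz⟩
      exact nz t (by linarith [ht.2]) ht0
    have anti : AntitoneOn u (Iic y) := by
      refine antitoneOn_of_deriv_nonpos (convex_Iic y) cu.continuousOn
        (fun x _ => (h2 x).differentiableAt.differentiableWithinAt) ?_
      intro x hx
      rw [interior_Iic] at hx
      rw [(h2 x).deriv]; exact (hneg x (le_of_lt hx)).le
    have : u y ≤ u1 := by
      refine ge_of_tendsto o1 ?_
      filter_upwards [eventually_le_atBot y] with x hx using anti hx (mem_Iic.2 le_rfl) hx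
    linarith [(hbd y).1]
  obtain ⟨x, hx⟩ := max_exists (x0 := 0) cu o1 o2 (hbd 0).1 (hbd 0).1
  have hwx : w x = 0 :=
    IsLocalMax.hasDerivAt_eq_zero (f := u) (Eventually.of_forall fun y => hx y) (h2 x)
  have hZx : Z < x := by
    by_contra! hn; exact nz x hn hwx
  have hcomp : IsCompact (Icc Z x ∩ w ⁻¹' {0}) :=
    isCompact_Icc.inter_right (isClosed_singleton.preimage cw)
  obtain ⟨a, ha, hal⟩ := hcomp.exists_isLeast ⟨x, ⟨hZx.le, le_rfl⟩, hwx⟩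
  have hwa : w a = 0 := ha.2
  have hZa : Z < a := by
    by_contra! hn; exact nz a hn hwa
  refine ⟨Z, a, hZa, hZ, ?_, hwa⟩
  intro z hz
  rcases le_total z Z with hzZ | hzZ
  · exact pos z hzZ
  · by_contra! hn
    obtain ⟨t, ht, ht0⟩ := intermediate_value_Icc' hzZ cw.continuousOn ⟨hn, (pos Z le_rfl).le⟩
    have := hal ⟨⟨ht.1, by linarith [ht.2, ha.1.2]⟩, ht0⟩
    linarith [ht.2]

theorem graph_exists {I : Set ℝ} {F G U W : ℝ → ℝ} {u1 u2 : ℝ} (h : ASol I F G U W)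
    (hpos : ∀ z, 0 < W z) (hb : Tendsto U atBot (nhds u1)) (ht : Tendsto U atTop (nhds u2)) :
    ∃ q : ℝ → ℝ, (∀ x ∈ Ioo u1 u2, 0 < q x) ∧
      (∀ x ∈ Ioo u1 u2, HasDerivAt q (F x / q x + G x) x) ∧
      (∀ s, q (U s) = W s) ∧ (∀ s, U s ∈ Ioo u1 u2) := by
  obtain ⟨h1, h2, h3⟩ := h
  have cU : Continuous U := continuous_iff_continuousAt.2 fun z => (h2 z).continuousAt
  have sm : StrictMono U := strictMono_of_deriv_pos fun z => by rw [(h2 z).deriv]; exact hpos z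
  have hrange : ∀ s, U s ∈ Ioo u1 u2 := by
    intro s
    constructor
    · have : u1 ≤ U (s - 1) := by
        refine le_of_tendsto hb ?_
        filter_upwards [eventually_le_atBot (s - 1)] with x hx using sm.monotone hx
      exact lt_of_le_of_lt this (sm (by linarith))
    · have : U (s + 1) ≤ u2 := by
        refine ge_of_tendsto ht ?_
        filter_upwards [eventually_ge_atTop (s + 1)] with x hx using sm.monotone hx
      exact lt_of_lt_of_le (sm (by linarith)) this
  have hsurj : ∀ x ∈ Ioo u1 u2, ∃ s, U s = x := by
    intro x hx
    obtain ⟨s, hs⟩ := (hb.eventually (gt_mem_nhds hx.1)).exists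
    obtain ⟨t, ht'⟩ := (ht.eventually (lt_mem_nhds hx.2)).exists
    exact mem_range_of_exists_le_of_exists_ge cU ⟨s, hs.le⟩ ⟨t, ht'.le⟩
  set T := Function.invFun U
  have TU : ∀ s, T (U s) = s := Function.leftInverse_invFun sm.injective
  have UT : ∀ x ∈ Ioo u1 u2, U (T x) = x := fun x hx => Function.invFun_eq (hsurj x hx)
  have Tsm : StrictMonoOn T (Ioo u1 u2) := by
    intro x hx y hy hxy
    rw [← sm.lt_iff_lt, UT x hx, UT y hy]; exact hxy
  have Tim : T '' Ioo u1 u2 = univ := by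
    refine eq_univ_of_forall fun s => ⟨U s, hrange s, TU s⟩
  refine ⟨fun x => W (T x), fun x _ => hpos _, ?_, fun s => by simp [TU], hrange⟩
  intro x hx
  have hn : Ioo u1 u2 ∈ nhds x := Ioo_mem_nhds hx.1 hx.2
  have Tc : ContinuousAt T x := Tsm.continuousAt_of_image_mem_nhds hn (by rw [Tim]; exact univ_mem)
  have hT : HasDerivAt T (W (T x))⁻¹ x :=
    HasDerivAt.of_local_left_inverse Tc (h2 (T x)) (hpos _).ne'
      (by filter_upwards [hn] with y hy using UT y hy)
  have := (h3 (T x)).comp x hT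
  refine this.congr_deriv ?_
  rw [UT x hx]
  have := (hpos (T x)).ne'
  field_simp

theorem compare {I : Set ℝ} {F G Gb u w U W : ℝ → ℝ} {u1 u0 u2 : ℝ}
    (h : ASol I F G u w) (hb : ASol I F Gb U W) (hF : ContinuousOn F I)
    (hG : ContinuousOn G I) (hL : LipZ I F) (hS : SignP I F u1 u0 u2) (hHO : HO u1 u w)
    (hHE : HE1 u1 u2 U W) (hle : ∀ x ∈ I, Gb x ≤ G x) : False := by
  have hbd := homo_bounds h hG hL hS hHO
  obtain ⟨Z, a, hZa, hZ, hwpos, hwa⟩ := homo_start h hS hHO hbd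
  obtain ⟨e1, e2, e3, e4, e5⟩ := hHE
  obtain ⟨q, qpos, qd, qU, hUr⟩ := graph_exists hb e5 e1 e2
  obtain ⟨h1, h2, h3⟩ := id h
  obtain ⟨s1, s2, s3, s4, s5, s6, s7, s8, s9, s10, s11⟩ := hS
  obtain ⟨o1, o2, o3, o4, o5⟩ := hHO
  have cu : Continuous u := continuous_iff_continuousAt.2 fun z => (h2 z).continuousAt
  have qc : ContinuousOn q (Ioo u1 u2) := fun x hx => (qd x hx).continuousAt.continuousWithinAt
  set D := fun z => w z - q (u z) with hD
  set k := fun z => F (u z) / q (u z) with hk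
  have ck : Continuous k := by
    refine Continuous.div ?_ ?_ (fun z => (qpos _ (hbd z)).ne')
    · exact hF.comp_continuous cu h1
    · exact qc.comp_continuous cu hbd
  have hDd : ∀ z, HasDerivAt D (- k z * D z + (G (u z) - Gb (u z)) * w z) z := by
    intro z
    have := (h3 z).sub ((qd (u z) (hbd z)).comp z (h2 z))
    refine this.congr_deriv ?_
    simp only [hD, hk]
    have := (qpos _ (hbd z)).ne'
    field_simp
    ring
  have hwn : ∀ z ≤ a, 0 ≤ w z := by
    intro z hz
    rcases hz.eq_or_lt with e | e
    · rw [e, hwa]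
    · exact (hwpos z e).le
  set P := fun z => ∫ t in a..z, k t with hP
  have hPd : ∀ z, HasDerivAt P (k z) z := fun z =>
    (ck.integral_hasStrictDerivAt a z).hasDerivAt
  have hEd : ∀ z, HasDerivAt (fun z => D z * Real.exp (P z))
      ((G (u z) - Gb (u z)) * w z * Real.exp (P z)) z := by
    intro z
    refine ((hDd z).mul (hPd z).exp).congr_deriv ?_
    ring
  have hmono : MonotoneOn (fun z => D z * Real.exp (P z)) (Iic a) := by
    refine monotoneOn_of_deriv_nonneg (convex_Iic a)
      (fun x _ => (hEd x).continuousAt.continuousWithinAt)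
      (fun x _ => (hEd x).differentiableAt.differentiableWithinAt) ?_
    intro x hx
    rw [interior_Iic] at hx
    rw [(hEd x).deriv]
    exact mul_nonneg (mul_nonneg (by linarith [hle _ (h1 x)]) (hwn x (le_of_lt hx)))
      (Real.exp_pos _).le
  have hDneg : ∀ z ≤ a, D z < 0 := by
    intro z hz
    have h5 : D z * Real.exp (P z) ≤ D a * Real.exp (P a) := hmono hz (mem_Iic.2 le_rfl) hz
    have h6 : D a < 0 := by
      simp only [hD, hwa]; linarith [qpos _ (hbd a)]
    have h7 : D a * Real.exp (P a) < 0 := mul_neg_of_neg_of_pos h6 (Real.exp_pos _)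
    by_contra! hn
    linarith [mul_nonneg hn (Real.exp_pos (P z)).le]
  have hDmono : MonotoneOn D (Iic Z) := by
    refine monotoneOn_of_deriv_nonneg (convex_Iic Z)
      (fun x _ => (hDd x).continuousAt.continuousWithinAt)
      (fun x _ => (hDd x).differentiableAt.differentiableWithinAt) ?_
    intro x hx
    rw [interior_Iic] at hx
    have hx' : x < Z := hx
    rw [(hDd x).deriv]
    have hk0 : 0 ≤ k x :=
      div_nonneg (s9 _ ⟨(hbd x).1, hZ x hx'.le⟩).le (qpos _ (hbd x)).le
    have i1 := mul_nonneg hk0 (neg_nonneg.2 (hDneg x (by linarith)).le)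
    have i2 := mul_nonneg (sub_nonneg.2 (hle _ (h1 x))) (hwn x (by linarith))
    linarith
  have hDZ : D Z < 0 := hDneg Z hZa.le
  have f1 := e3.eventually (gt_mem_nhds (show (0:ℝ) < - D Z by linarith))
  have f2 := e1.eventually (gt_mem_nhds (hbd Z).1)
  obtain ⟨s, hs1, hs2⟩ := (f1.and f2).exists
  obtain ⟨y, hy1, hy2⟩ := ((o1.eventually (gt_mem_nhds (hUr s).1)).and
    (eventually_le_atBot Z)).exists
  obtain ⟨t, ht, hts⟩ := intermediate_value_Icc hy2 cu.continuousOn ⟨hy1.le, hs2.le⟩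
  have g1 : D t ≤ D Z := hDmono (mem_Iic.2 ht.2) (mem_Iic.2 le_rfl) ht.2
  have g2 : D t = w t - W s := by simp only [hD]; rw [hts, qU]
  have g3 := hwn t (by linarith [ht.2])
  linarith

theorem tv_facts
    (V V' V'' κ : ℝ → ℝ) (τ UM K c : ℝ) (uMx umx : ℝ → ℝ)
    (hA1 : A1 V V' V'' UM) (hA2 : A2 κ) (hτ : 0 < τ)
    (huMx : UMaxHyp V' UM uMx) (humx : UMinHyp V' UM umx)
    (hD1 : (K, c) ∈ D1 V V' UM uMx umx)
    (u1 u0 u2 : ℝ) (hz : ZerosD1 V K c u1 u0 u2) :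
    ContinuousOn (fun x => g1TV κ τ x * fTV V K c x) (Ioi 0) ∧
    (∀ μ, ContinuousOn (fun x => g2TV κ τ x * hTV V' K μ x) (Ioi 0)) ∧
    LipZ (Ioi 0) (fun x => g1TV κ τ x * fTV V K c x) ∧
    SignP (Ioi 0) (fun x => g1TV κ τ x * fTV V K c x) u1 u0 u2 := by
  obtain ⟨a1, a2, a3, a4, a5, -, a7, a8, a9, a10⟩ := hA1
  obtain ⟨b1, b2⟩ := hA2
  obtain ⟨d1, d2, d3, d4⟩ := hD1
  simp only at d1 d2 d3 d4
  obtain ⟨z1, z2, z3, z4, z5, z6, z7⟩ := hz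
  have hV0 : 0 ≤ V' 0 := by
    have t : Tendsto V' (nhdsWithin 0 (Ioi 0)) (nhds (V' 0)) :=
      ((a2 0 (mem_Ici.2 le_rfl)).mono Ioi_subset_Ici_self)
    refine ge_of_tendsto t ?_
    filter_upwards [self_mem_nhdsWithin] with x hx using (a5 x hx).le
  have hK : 0 < K := by linarith
  obtain ⟨m1, m2⟩ := huMx K d1 d2
  obtain ⟨n1, n2⟩ := humx K hK d2
  -- continuity
  have cV : ContinuousOn V (Ici 0) := fun x hx => (a1 x hx).continuousWithinAt
  have cf : ContinuousOn (fTV V K c) (Ici 0) := by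
    unfold fTV
    exact (((continuous_const.mul continuous_id).continuousOn.sub cV).sub
      continuousOn_const).div_const K
  have cκ : ContinuousOn (fun x : ℝ => κ (1 / x)) (Ioi 0) := by
    refine b1.continuousOn.comp ?_ ?_
    · exact continuousOn_const.div continuousOn_id (fun x hx => ne_of_gt hx)
    · intro x hx; exact mem_Ioi.2 (one_div_pos.2 (mem_Ioi.1 hx))
  have kpos : ∀ x : ℝ, 0 < x → 0 < κ (1 / x) := fun x hx => b2 _ (one_div_pos.2 hx)
  have cg1 : ContinuousOn (g1TV κ τ) (Ioi 0) := by
    unfold g1TV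
    exact continuousOn_const.div (continuousOn_const.mul cκ)
      (fun x hx => (mul_pos hτ (kpos x hx)).ne')
  have cg2 : ContinuousOn (g2TV κ τ) (Ioi 0) := by
    unfold g2TV
    exact continuousOn_id.div (continuousOn_const.mul cκ)
      (fun x hx => (mul_pos (by linarith) (kpos x hx)).ne')
  have g1pos : ∀ x, 0 < x → 0 < g1TV κ τ x := fun x hx => by
    unfold g1TV; exact one_div_pos.2 (mul_pos hτ (kpos x hx))
  have cF : ContinuousOn (fun x => g1TV κ τ x * fTV V K c x) (Ioi 0) :=
    cg1.mul (cf.mono Ioi_subset_Ici_self)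
  have cG : ∀ μ, ContinuousOn (fun x => g2TV κ τ x * hTV V' K μ x) (Ioi 0) := by
    intro μ
    refine cg2.mul ?_
    unfold hTV fdTV
    exact ((continuousOn_const.sub (a2.mono Ioi_subset_Ici_self)).div_const K).add
      continuousOn_const
  have dV : ∀ x, 0 < x → HasDerivAt V (V' x) x := fun x hx =>
    (a1 x (le_of_lt hx)).hasDerivAt (Ici_mem_nhds hx)
  have df : ∀ x, 0 < x → HasDerivAt (fTV V K c) (fdTV V' K x) x := by
    intro x hx
    unfold fTV fdTV
    have := (((((hasDerivAt_id x).const_mul K).sub (dV x hx)).sub_const c).div_const K)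
    simpa using this
  -- Lipschitz bound
  have lip : ∀ x y, 0 < x → 0 < y →
      |fTV V K c x - fTV V K c y| ≤ ((K + V' UM) / K) * |x - y| := by
    intro x y hx hy
    have := (convex_Ioi (0:ℝ)).norm_image_sub_le_of_norm_hasDerivWithin_le
      (f := fTV V K c) (f' := fdTV V' K) (C := (K + V' UM) / K)
      (fun t ht => (df t ht).hasDerivWithinAt) (fun t ht => by
        unfold fdTV
        rw [Real.norm_eq_abs, abs_div, abs_of_pos hK]
        gcongr
        have := a5 t ht
        have := a9 t ht
        rw [abs_le]; constructor <;> linarith) (mem_Ioi.2 hy) (mem_Ioi.2 hx)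
    simpa using this
  have hLip : LipZ (Ioi 0) (fun x => g1TV κ τ x * fTV V K c x) := by
    intro b hb hFb S hS hSc
    have hfb : fTV V K c b = 0 := by
      rcases mul_eq_zero.1 hFb with h | h
      · exact absurd h (g1pos b hb).ne'
      · exact h
    obtain ⟨M, hM⟩ := hSc.exists_bound_of_continuousOn (cg1.mono hS)
    refine ⟨M * ((K + V' UM) / K), fun x hx => ?_⟩
    have e1 := lip x b (hS hx) hb
    rw [hfb, sub_zero] at e1
    have e2 := hM x hx
    rw [Real.norm_eq_abs] at e2
    rw [abs_mul, mul_assoc]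
    exact mul_le_mul e2 e1 (abs_nonneg _) (le_trans (abs_nonneg _) e2)
  -- signs
  have f0 : fTV V K c 0 < 0 := by
    have : c0v V < c := lt_of_le_of_lt (le_max_left _ _) d3
    unfold c0v at this
    unfold fTV
    exact div_neg_of_neg_of_pos (by linarith) hK
  have fM : 0 < fTV V K c (uMx K) := by
    unfold cMf at d4
    unfold fTV
    exact div_pos (by linarith) hK
  have fm : fTV V K c (umx K) < 0 := by
    have : cmf V umx K < c := lt_of_le_of_lt (le_max_right _ _) d3
    unfold cmf at this
    unfold fTV
    exact div_neg_of_neg_of_pos (by linarith) hK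
  have flarge : ∀ X, ∃ y, X < y ∧ 0 < y ∧ 0 < fTV V K c y := by
    intro X
    obtain ⟨R, hR⟩ := eventually_atTop.1 (a7.eventually (gt_mem_nhds (half_pos hK)))
    set R' := max (max R 1) X
    have r1 : R ≤ R' := le_trans (le_max_left _ _) (le_max_left _ _)
    have r2 : 1 ≤ R' := le_trans (le_max_right _ _) (le_max_left _ _)
    have r3 : X ≤ R' := le_max_right _ _
    set y := R' + 2 * (|fTV V K c R'| + 1)
    have hy : R' < y := by simp only [y]; linarith [abs_nonneg (fTV V K c R')]
    refine ⟨y, by linarith, by linarith, ?_⟩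
    obtain ⟨t, ht, hts⟩ := exists_hasDerivAt_eq_slope (fTV V K c) (fdTV V' K) hy
      (cf.mono fun x hx => mem_Ici.2 (by linarith [hx.1]))
      (fun x hx => df x (by linarith [hx.1]))
    have hd : 1 / 2 ≤ fdTV V' K t := by
      unfold fdTV
      have := hR t (by linarith [ht.1])
      rw [le_div_iff₀ hK]; linarith
    have h6 : 0 < y - R' := by linarith
    rw [hts, le_div_iff₀ h6] at hd
    have e : y - R' = 2 * (|fTV V K c R'| + 1) := by simp only [y]; ring
    rw [e] at hd
    linarith [neg_abs_le (fTV V K c R')]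
  have uM0 : 0 < uMx K := m1.1
  have huu : uMx K < umx K := by linarith [m1.2]
  have ivt : ∀ x y, 0 ≤ x → x < y → fTV V K c x * fTV V K c y < 0 →
      ∃ t, x < t ∧ t < y ∧ fTV V K c t = 0 := by
    intro x y hx hxy hneg
    have cc : ContinuousOn (fTV V K c) (Icc x y) :=
      cf.mono fun t ht => mem_Ici.2 (by linarith [ht.1])
    rcases mul_neg_iff.1 hneg with ⟨p, q⟩ | ⟨p, q⟩
    · obtain ⟨t, ht, h0⟩ := intermediate_value_Ioo' hxy.le cc ⟨q, p⟩
      exact ⟨t, ht.1, ht.2, h0⟩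
    · obtain ⟨t, ht, h0⟩ := intermediate_value_Ioo hxy.le cc ⟨p, q⟩
      exact ⟨t, ht.1, ht.2, h0⟩
  obtain ⟨y, y1, y2, y3⟩ := flarge (umx K)
  obtain ⟨t1, p1, q1, r1⟩ := ivt 0 (uMx K) le_rfl uM0 (mul_neg_of_neg_of_pos f0 fM)
  obtain ⟨t2, p2, q2, r2⟩ := ivt (uMx K) (umx K) uM0.le huu (mul_neg_of_pos_of_neg fM fm)
  obtain ⟨t3, p3, q3, r3⟩ := ivt (umx K) y (by linarith) y1 (mul_neg_of_neg_of_pos fm y3)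
  have e1 := z7 t1 p1 r1
  have e2 := z7 t2 (by linarith) r2
  have e3 := z7 t3 (by linarith) r3
  have order : t1 = u1 ∧ t2 = u0 ∧ t3 = u2 := by
    rcases e1 with e1 | e1 | e1 <;> rcases e2 with e2 | e2 | e2 <;>
      rcases e3 with e3 | e3 | e3 <;> first | exact ⟨e1, e2, e3⟩ | (exfalso; linarith)
  obtain ⟨o1, o2, o3⟩ := order
  -- two points in a zero-free interval have the same sign
  have same : ∀ x y, 0 ≤ x → 0 ≤ y → (∀ t, 0 < t → min x y ≤ t → t ≤ max x y →
      fTV V K c t ≠ 0) → ¬ (fTV V K c x * fTV V K c y < 0) := by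
    intro x y hx hy hno hneg
    rcases lt_trichotomy x y with h | h | h
    · obtain ⟨t, ht1, ht2, ht⟩ := ivt x y hx h hneg
      exact hno t (by linarith) (by rw [min_eq_left h.le]; exact ht1.le)
        (by rw [max_eq_right h.le]; exact ht2.le) ht
    · rw [h] at hneg; linarith [mul_self_nonneg (fTV V K c y)]
    · obtain ⟨t, ht1, ht2, ht⟩ := ivt y x hy h (by rw [mul_comm]; exact hneg)
      exact hno t (by linarith) (by rw [min_eq_right h.le]; exact ht1.le)
        (by rw [max_eq_left h.le]; exact ht2.le) ht
  have no : ∀ t, 0 < t → t ≠ u1 → t ≠ u0 → t ≠ u2 → fTV V K c t ≠ 0 := by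
    intro t ht h1 h2 h3 h0
    rcases z7 t ht h0 with h | h | h
    · exact h1 h
    · exact h2 h
    · exact h3 h
  have signs : ∀ x y, 0 < x → 0 ≤ y → (∀ t, min x y ≤ t → t ≤ max x y →
      t ≠ u1 ∧ t ≠ u0 ∧ t ≠ u2) → (fTV V K c y < 0 → fTV V K c x < 0) ∧
      (0 < fTV V K c y → 0 < fTV V K c x) := by
    intro x y hx hy hno
    have h1 := same x y hx.le hy (fun t ht ha hb => by
      obtain ⟨i, j, k⟩ := hno t ha hb
      exact no t ht i j k)
    obtain ⟨i, j, k⟩ := hno x (min_le_left _ _) (le_max_left _ _)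
    have h2 := no x hx i j k
    constructor
    · intro hyn
      by_contra! hn
      exact h1 (mul_neg_of_pos_of_neg (lt_of_le_of_ne hn (Ne.symm h2)) hyn)
    · intro hyn
      by_contra! hn
      exact h1 (mul_neg_of_neg_of_pos (lt_of_le_of_ne hn h2) hyn)
  subst o1 o2 o3
  refine ⟨cF, cG, hLip, z2, z3, z1, mem_Ioi.2 (by linarith), by simp [z4], by simp [z6], ?_, ?_,
    ?_, ?_, ?_⟩
  · intro x hx; exact mem_Ioi.2 (by linarith [hx.1])
  · intro x hx hxu
    have hx' : 0 < x := hx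
    refine mul_neg_of_pos_of_neg (g1pos x hx) ((signs x 0 hx le_rfl ?_).1 f0)
    intro t _ hb
    have : t < t1 := lt_of_le_of_lt hb (max_lt hxu z1)
    exact ⟨by linarith, by linarith, by linarith⟩
  · intro x hx
    have hx' : 0 < x := by linarith [hx.1]
    refine mul_pos (g1pos x hx') ((signs x (uMx K) hx' uM0.le ?_).2 fM)
    intro t ha hb
    have h1 : t < t2 := lt_of_le_of_lt hb (max_lt hx.2 p2)
    have h2 : t1 < t := lt_of_lt_of_le (lt_min hx.1 q1) ha
    exact ⟨h2.ne', h1.ne, by linarith⟩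
  · intro x hx
    have hx' : 0 < x := by linarith [hx.1]
    refine mul_neg_of_pos_of_neg (g1pos x hx') ((signs x (umx K) hx' (by linarith) ?_).1 fm)
    intro t ha hb
    have h1 : t < t3 := lt_of_le_of_lt hb (max_lt hx.2 p3)
    have h2 : t2 < t := lt_of_lt_of_le (lt_min hx.1 q2) ha
    exact ⟨by linarith, h2.ne', h1.ne⟩
  · intro x hx hxu
    have hx' : 0 < x := hx
    refine mul_pos (g1pos x hx') ((signs x y hx' y2.le ?_).2 y3)
    intro t ha hb
    have h2 : t3 < t := lt_of_lt_of_le (lt_min hxu q3) ha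
    exact ⟨by linarith, by linarith, h2.ne'⟩

theorem HO.rev {b : ℝ} {u w : ℝ → ℝ} (h : HO b u w) :
    HO b (fun z => u (-z)) (fun z => - w (-z)) := by
  obtain ⟨h1, h2, h3, h4, h5⟩ := h
  refine ⟨h2.comp tendsto_neg_atBot_atTop, h1.comp tendsto_neg_atTop_atBot, ?_, ?_, ?_⟩
  · simpa using (h4.comp tendsto_neg_atBot_atTop).neg
  · simpa using (h3.comp tendsto_neg_atTop_atBot).neg
  · intro hc; apply h5; intro z; simpa using hc (-z)

theorem HO.refl {b : ℝ} {u w : ℝ → ℝ} (h : HO b u w) :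
    HO (-b) (fun z => - u z) (fun z => - w z) := by
  obtain ⟨h1, h2, h3, h4, h5⟩ := h
  refine ⟨h1.neg, h2.neg, by simpa using h3.neg, by simpa using h4.neg, ?_⟩
  intro hc; apply h5; intro z; simpa using hc z

theorem HE2.rev {a b : ℝ} {u w : ℝ → ℝ} (h : HE2 a b u w) :
    HE1 a b (fun z => u (-z)) (fun z => - w (-z)) := by
  obtain ⟨h1, h2, h3, h4, h5⟩ := h
  refine ⟨h2.comp tendsto_neg_atBot_atTop, h1.comp tendsto_neg_atTop_atBot, ?_, ?_, ?_⟩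
  · simpa using (h4.comp tendsto_neg_atBot_atTop).neg
  · simpa using (h3.comp tendsto_neg_atTop_atBot).neg
  · intro z; have := h5 (-z); linarith

theorem HE1.rev {a b : ℝ} {u w : ℝ → ℝ} (h : HE1 a b u w) :
    HE2 a b (fun z => u (-z)) (fun z => - w (-z)) := by
  obtain ⟨h1, h2, h3, h4, h5⟩ := h
  refine ⟨h2.comp tendsto_neg_atBot_atTop, h1.comp tendsto_neg_atTop_atBot, ?_, ?_, ?_⟩
  · simpa using (h4.comp tendsto_neg_atBot_atTop).neg
  · simpa using (h3.comp tendsto_neg_atTop_atBot).neg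
  · intro z; have := h5 (-z); linarith

theorem HE2.refl {a b : ℝ} {u w : ℝ → ℝ} (h : HE2 a b u w) :
    HE1 (-b) (-a) (fun z => - u z) (fun z => - w z) := by
  obtain ⟨h1, h2, h3, h4, h5⟩ := h
  refine ⟨h1.neg, h2.neg, by simpa using h3.neg, by simpa using h4.neg, ?_⟩
  intro z; have := h5 z; linarith

theorem stmt3
    (V V' V'' κ : ℝ → ℝ) (τ UM K c K₁ : ℝ) (uMx umx : ℝ → ℝ)
    (hA1 : A1 V V' V'' UM) (hA2 : A2 κ) (hτ : 0 < τ) (hK : K ≠ 0)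
    (huMx : UMaxHyp V' UM uMx) (humx : UMinHyp V' UM umx)
    (hK1 : K1Hyp V V' UM umx K₁)
    (hC : CondC V' κ UM K₁ K)
    (hD1 : (K, c) ∈ D1 V V' UM uMx umx)
    (u1 u0 u2 μb μf : ℝ) (hz : ZerosD1 V K c u1 u0 u2)
    (hμb : ∀ μ : ℝ, HasHE1 V V' κ τ K c μ u1 u2 ↔ μ = μb)
    (hμf : ∀ μ : ℝ, HasHE2 V V' κ τ K c μ u1 u2 ↔ μ = μf) :
    (μb ≤ μf → ∀ μ : ℝ, ¬ HasHO V V' κ τ K c μ u1) ∧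
    (μf ≤ μb → ∀ μ : ℝ, ¬ HasHO V V' κ τ K c μ u2) := by
  obtain ⟨cF, cG, hL, hS⟩ := tv_facts V V' V'' κ τ UM K c uMx umx hA1 hA2 hτ huMx humx hD1
    u1 u0 u2 hz
  obtain ⟨U, W, hbs, hbp, hbHE⟩ := (hμb μb).2 rfl
  obtain ⟨X, Y, hfs, hfp, hfHE⟩ := (hμf μf).2 rfl
  have toA : ∀ {μ : ℝ} {u w : ℝ → ℝ}, IsTVSol V V' κ τ K c μ u w → (∀ z, 0 < u z) →
      ASol (Ioi 0) (fun x => g1TV κ τ x * fTV V K c x)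
        (fun x => g2TV κ τ x * hTV V' K μ x) u w := fun h hp => ⟨hp, h.1, h.2⟩
  have hb := toA hbs hbp
  have hf := toA hfs hfp
  have hmono : ∀ {μ ν : ℝ}, μ ≤ ν → ∀ x : ℝ, 0 < x →
      g2TV κ τ x * hTV V' K μ x ≤ g2TV κ τ x * hTV V' K ν x := by
    intro μ ν hle x hx
    have h2 : 0 ≤ g2TV κ τ x := by
      unfold g2TV
      have := hA2.2 (1 / x) (one_div_pos.2 hx)
      positivity
    refine mul_le_mul_of_nonneg_left ?_ h2
    unfold hTV
    linarith
  have cneg : ContinuousOn (fun x : ℝ => -x) {x | -x ∈ Ioi (0:ℝ)} := continuous_neg.continuousOn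
  have cF' : ContinuousOn (fun x => - (g1TV κ τ (-x) * fTV V K c (-x))) {x | -x ∈ Ioi (0:ℝ)} :=
    (cF.comp cneg (fun x hx => hx)).neg
  constructor
  · rintro hle μ ⟨u, w, hs, hp, hHO⟩
    have h := toA hs hp
    have c1 : μ < μb := by
      by_contra! hn
      exact compare h hb cF (cG μ) hL hS hHO hbHE (fun x hx => hmono hn x hx)
    have c2 : μf < μ := by
      by_contra! hn
      exact compare h.rev hf.rev cF (cG μ).neg hL hS hHO.rev hfHE.rev
        (fun x hx => neg_le_neg (hmono hn x hx))
    linarith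
  · rintro hle μ ⟨u, w, hs, hp, hHO⟩
    have h := toA hs hp
    have cG' : ContinuousOn (fun x => g2TV κ τ (-x) * hTV V' K μ (-x)) {x | -x ∈ Ioi (0:ℝ)} :=
      (cG μ).comp cneg (fun x hx => hx)
    have c1 : μ < μf := by
      by_contra! hn
      exact compare h.refl hf.refl cF' cG' hL.refl hS.refl hHO.refl hfHE.refl
        (fun x hx => hmono hn (-x) hx)
    have c2 : μb < μ := by
      by_contra! hn
      exact compare h.rev.refl hb.rev.refl cF' cG'.neg hL.refl hS.refl hHO.rev.refl hbHE.rev.refl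
        (fun x hx => neg_le_neg (hmono hn (-x) hx))
    linarith

end TrafficTW
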